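/- For λ₁ ≥ λ₂ ≥ 2, h₁ ≥ h₂ ≥ 2 and h₁ ≤ m ≤ h₁+h₂+λ₂−3, the identity C(m+λ₁−1, m−h₁)·C(m+λ₂−2, m−h₁)·QYT_{=m}(λ) = C(λ₁+h₂−2, m−h₁)·C(λ₂+h₂−3, m−h₁)·SSYT_m(λ) holds, where λ = (λ₁, λ₂, 2^{h₂−2}, 1^{h₁−h₂}). -/

import Mathlib

open YoungDiagram

/-- Entries of `T` are all `< m`.  Entries are 0-based: the value `v` represents the
positive integer `v + 1`, so this says all (1-based) entries are at most `m`. -/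
def EntryLE (μ : YoungDiagram) (T : SemistandardYoungTableau μ) (m : ℕ) : Prop :=
  ∀ i j : ℕ, (i, j) ∈ μ → T i j < m

/-- `T` is quasi-Yamanouchi: whenever a value `v > 0` appears, the leftmost
occurrence of `v` is weakly left of some occurrence of `v - 1`; equivalently some
occurrence of `v` is weakly left of some occurrence of `v - 1`. -/
def IsQY (μ : YoungDiagram) (T : SemistandardYoungTableau μ) : Prop :=
  ∀ v : ℕ, 0 < v → (∃ i j : ℕ, (i, j) ∈ μ ∧ T i j = v) →
    ∃ i j i' j' : ℕ, (i, j) ∈ μ ∧ (i', j') ∈ μ ∧ T i j = v ∧ T i' j' = v - 1 ∧ j ≤ j'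

/-- The maximum (1-based) entry of `T` is exactly `m`: all entries are `< m`
(0-based) and the value `m - 1` appears. -/
def MaxEq (μ : YoungDiagram) (T : SemistandardYoungTableau μ) (m : ℕ) : Prop :=
  EntryLE μ T m ∧ ∃ i j : ℕ, (i, j) ∈ μ ∧ T i j = m - 1

/-- The number of quasi-Yamanouchi tableaux of shape `μ` with maximum entry exactly `m`. -/
noncomputable def QYTeq (μ : YoungDiagram) (m : ℕ) : ℕ :=
  Nat.card {T : SemistandardYoungTableau μ // IsQY μ T ∧ MaxEq μ T m}

/-- The number of semistandard Young tableaux of shape `μ` with entries at most `m`. -/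
noncomputable def SSYTle (μ : YoungDiagram) (m : ℕ) : ℕ :=
  Nat.card {T : SemistandardYoungTableau μ // EntryLE μ T m}

/-- `T` is a standard Young tableau: each of the values `0, …, μ.card - 1`
(representing `1, …, n`) appears exactly once. -/
def IsSYT (μ : YoungDiagram) (T : SemistandardYoungTableau μ) : Prop :=
  ∀ v : ℕ, v < μ.card → ∃! p : ℕ × ℕ, p ∈ μ ∧ T p.1 p.2 = v

/-- The number of standard Young tableaux of shape `μ`. -/
noncomputable def SYTcount (μ : YoungDiagram) : ℕ :=
  Nat.card {T : SemistandardYoungTableau μ // IsSYT μ T}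

/-- The descent set of a standard tableau, in the paper's 1-based labelling:
`d ∈ Des T` iff `1 ≤ d ≤ n - 1` and the (1-based) entry `d + 1` (0-based value `d`)
appears weakly left of the (1-based) entry `d` (0-based value `d - 1`). -/
def Des (μ : YoungDiagram) (T : SemistandardYoungTableau μ) : Set ℕ :=
  {d | 1 ≤ d ∧ d ≤ μ.card - 1 ∧
    ∃ i j i' j' : ℕ, (i, j) ∈ μ ∧ (i', j') ∈ μ ∧ T i j = d ∧ T i' j' = d - 1 ∧ j ≤ j'}

/-- One destandardization step at value `v`: every occurrence of `v` lies strictly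
right of every occurrence of `v - 1` (in particular vacuously if no `v - 1` appears),
and `T'` is obtained from `T` by decrementing every entry equal to `v` to `v - 1`. -/
def StepAt (μ : YoungDiagram) (T T' : SemistandardYoungTableau μ) (v : ℕ) : Prop :=
  0 < v ∧ (∃ i j : ℕ, (i, j) ∈ μ ∧ T i j = v) ∧
    (∀ i j i' j' : ℕ, (i, j) ∈ μ → (i', j') ∈ μ → T i j = v → T i' j' = v - 1 → j' < j) ∧
    (∀ i j : ℕ, (i, j) ∈ μ → T' i j = if T i j = v then v - 1 else T i j)

/-- One destandardization step (at some value). -/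
def Step (μ : YoungDiagram) (T T' : SemistandardYoungTableau μ) : Prop :=
  ∃ v : ℕ, StepAt μ T T' v

/-- `Q` is the destandardization of `T`: it is reachable from `T` by destandardization
steps and no further step applies to it. -/
def IsDst (μ : YoungDiagram) (T Q : SemistandardYoungTableau μ) : Prop :=
  Relation.ReflTransGen (Step μ) T Q ∧ ∀ Q' : SemistandardYoungTableau μ, ¬ Step μ Q Q'

/-- The hook length of the box in row `i`, column `j` of `μ`. -/
def hookLength (μ : YoungDiagram) (i j : ℕ) : ℕ :=
  (μ.rowLen i - j) + (μ.colLen j - i) - 1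

/-- The hook-content product `∏_{u ∈ μ} (k + c(u)) / h(u)` where `c(u)` is the
content (column minus row) and `h(u)` the hook length. -/
noncomputable def hookContent (μ : YoungDiagram) (k : ℕ) : ℚ :=
  ∏ c ∈ μ.cells, ((k : ℚ) + (c.2 : ℚ) - (c.1 : ℚ)) / (hookLength μ c.1 c.2 : ℚ)

/-- `μ` is the partition `(l1, l2, 2^{h2-2}, 1^{h1-h2})`: first row `l1`, second row
`l2`, rows `2, …, h2 - 1` of length `2`, rows `h2, …, h1 - 1` of length `1`, and no
other rows; so the first column has height `h1` and the second column height `h2`. -/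
def HasRows2 (μ : YoungDiagram) (l1 l2 h1 h2 : ℕ) : Prop :=
  μ.rowLen 0 = l1 ∧ μ.rowLen 1 = l2 ∧
    (∀ i : ℕ, 2 ≤ i → i < h2 → μ.rowLen i = 2) ∧
    (∀ i : ℕ, h2 ≤ i → i < h1 → μ.rowLen i = 1) ∧
    (∀ i : ℕ, h1 ≤ i → μ.rowLen i = 0)

/-!
Standardization identifies a semistandard tableau of shape `μ` with a standard tableau `s` together
with a weakly increasing word, to which one unit is added after each descent of `s`. The tableau is
quasi-Yamanouchi exactly when the word vanishes, and its largest entry is then one more than the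
number of descents. Counting words gives, for `n = |μ|`,
`SSYT_m = ∑ r, QYT_{=r+1} * C(n + m - 1 - r, n)`,
which is unitriangular in the `QYT_{=r+1}`.

On the other hand, removing the cells with the largest entry expresses `SSYT_m` as a determinant of
binomial coefficients, which determines the ratio of `SSYT_{m+1}` and `SSYT_m`. With
`a = λ₁ + h₂ - 2`, `b = λ₂ + h₂ - 3` and `d = h₁ - h₂ + 1`, so that `n = a + b + d`, the shape
`(λ₁, λ₂, 2^{h₂-2}, 1^{h₁-h₂})` has `SSYT_{h₁+M}` proportional to
`C(M + a + d, M) * C(M + b + d, b)`. Nanjundiah's identity expands this product in the same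
unitriangular system, so `QYT_{=h₁+M}` is proportional to `C(a, M) * C(b + d, M + d)` with the same
constant.
-/

open Finset

/-! ### Nanjundiah's identity -/

theorem sum_range_choose_mul_choose_add {m n k N : ℕ} (h : m ≤ k + N ∨ n ≤ N) :
    ∑ j ∈ range (N + 1), n.choose j * m.choose (k + j) = (m + n).choose (k + n) := by
  have truncate : ∑ j ∈ range (N + 1), n.choose j * m.choose (k + j) =
      ∑ j ∈ range (n + 1), n.choose j * m.choose (k + j) := by
    have left : ∑ i ∈ range n, n.choose (N + 1 + i) * m.choose (k + (N + 1 + i)) = 0 :=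
      sum_eq_zero fun i _ ↦ mul_eq_zero.2 <| h.symm.imp
        (fun _ ↦ Nat.choose_eq_zero_of_lt (by omega)) fun _ ↦ Nat.choose_eq_zero_of_lt (by omega)
    have right : ∑ i ∈ range N, n.choose (n + 1 + i) * m.choose (k + (n + 1 + i)) = 0 :=
      sum_eq_zero fun i _ ↦ by rw [Nat.choose_eq_zero_of_lt (by omega), zero_mul]
    have extend := sum_range_add (fun j ↦ n.choose j * m.choose (k + j)) (N + 1) n
    rw [left, show N + 1 + n = n + 1 + N by omega, sum_range_add, right] at extend
    exact extend.symm
  have reflect := sum_range_add (fun j ↦ n.choose j * m.choose (n + k - j)) (n + 1) k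
  rw [sum_eq_zero (s := range k) fun i _ ↦ by rw [Nat.choose_eq_zero_of_lt (by omega), zero_mul],
    add_zero, ← sum_range_reflect _ (n + 1)] at reflect
  rw [truncate, add_comm m, add_comm k, Nat.add_choose_eq,
    Nat.sum_antidiagonal_eq_sum_range_succ (fun i j ↦ n.choose i * m.choose j),
    show (n + k).succ = n + 1 + k by omega, reflect]
  refine sum_congr rfl fun j hj ↦ ?_
  have hj : j ≤ n := by simpa [Nat.lt_succ_iff] using hj
  rw [Nat.add_sub_cancel, Nat.choose_symm hj, show n + k - (n - j) = k + j by omega]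

theorem choose_add_mul_choose_eq_sum (b d e : ℕ) {r M : ℕ} (hr : r ≤ M) :
    (b + d).choose (r + d) * (e + b + M - r).choose (e + b) =
      ∑ k ∈ range (M + 1), (b + d).choose (k + d) * (k + d).choose (r + d) *
        (M + e).choose (e + k) := by
  obtain ⟨M, rfl⟩ := Nat.exists_eq_add_of_le hr
  rw [show r + M + 1 = r + (M + 1) by omega, sum_range_add, sum_eq_zero fun k hk ↦ by
    rw [(k + d).choose_eq_zero_of_lt (Nat.add_lt_add_right (mem_range.1 hk) d), mul_zero, zero_mul],
    zero_add]
  obtain hb | hb := lt_or_ge b r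
  · rw [Nat.choose_eq_zero_of_lt (by omega), zero_mul]
    exact (sum_eq_zero fun k _ ↦ by
      rw [Nat.choose_eq_zero_of_lt (show b + d < r + k + d by omega), zero_mul, zero_mul]).symm
  obtain ⟨t, rfl⟩ := Nat.exists_eq_add_of_le hb
  rw [show e + (r + t) + (r + M) - r = r + M + e + t by omega,
    show e + (r + t) = e + r + t by omega,
    ← sum_range_choose_mul_choose_add (N := M) (m := r + M + e) (.inl (by omega)), mul_sum]
  refine sum_congr rfl fun j _ ↦ ?_
  rw [Nat.choose_mul (by omega), show r + t + d - (r + d) = t by omega,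
    show r + j + d - (r + d) = j by omega, add_assoc e, mul_assoc]

theorem nanjundiah_identity (a b d M : ℕ) :
    ∑ r ∈ range (M + 1), a.choose r * (b + d).choose (r + d) *
        (a + b + d + M - r).choose (a + b + d) =
      (M + a + d).choose M * (M + b + d).choose b := by
  calc
    _ = ∑ r ∈ range (M + 1), ∑ k ∈ range (M + 1), a.choose r * ((b + d).choose (k + d) *
          (k + d).choose (r + d) * (M + (a + d)).choose (a + d + k)) := by
      refine sum_congr rfl fun r hr ↦ ?_
      rw [mul_assoc, ← mul_sum, ← choose_add_mul_choose_eq_sum b d (a + d) (by grind),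
        add_right_comm a d b]
    _ = ∑ k ∈ range (M + 1), (b + d).choose (k + d) * (M + (a + d)).choose (a + d + k) *
          (a + d + k).choose (a + d) := by
      rw [sum_comm]
      refine sum_congr rfl fun k hk ↦ ?_
      have vandermonde : ∑ r ∈ range (M + 1), a.choose r * (k + d).choose (r + d) =
          (a + d + k).choose (a + d) := by
        simp_rw [add_comm _ d]
        rw [sum_range_choose_mul_choose_add (by grind), add_right_comm, add_comm d a]
      rw [← vandermonde, mul_sum]
      exact sum_congr rfl fun r _ ↦ by ring
    _ = (M + a + d).choose M * ∑ k ∈ range (M + 1), M.choose k * (b + d).choose (d + k) := by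
      rw [mul_sum]
      refine sum_congr rfl fun k _ ↦ ?_
      rw [mul_assoc, Nat.choose_mul (by omega), Nat.add_sub_cancel, Nat.add_sub_cancel_left,
        add_assoc M, Nat.choose_symm_add, add_comm d]
      ring
    _ = _ := by
      rw [sum_range_choose_mul_choose_add (.inr le_rfl), add_comm d M,
        show b + d + M = b + (M + d) by omega, ← Nat.choose_symm_add, add_left_comm,
        ← add_assoc M b d]

theorem eq_of_sum_range_mul_eq {R : Type*} [Semiring R] [IsLeftCancelAdd R] {c : ℕ → ℕ → R}
    (hc : ∀ M, c M M = 1) {f g : ℕ → R}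
    (h : ∀ M, ∑ r ∈ range (M + 1), f r * c M r = ∑ r ∈ range (M + 1), g r * c M r) : f = g := by
  funext M
  induction M using Nat.strong_induction_on with
  | _ M ih =>
    have hM := h M
    rw [sum_range_succ, sum_range_succ, sum_congr rfl fun r hr ↦ by rw [ih r (mem_range.1 hr)],
      hc, mul_one, mul_one] at hM
    exact add_left_cancel hM

theorem choose_mul_choose_add (M b d : ℕ) :
    (M + b + d).choose M * (b + d).choose (M + d) = b.choose M * (M + b + d).choose b := by
  obtain hM | hM := lt_or_ge b M
  · rw [b.choose_eq_zero_of_lt hM, Nat.choose_eq_zero_of_lt (Nat.add_lt_add_right hM d), mul_zero,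
      zero_mul]
  calc
    _ = (M + b + d).choose M * (M + b + d - M).choose (b - M) := by
      rw [show M + b + d - M = b + d by omega, ← Nat.choose_symm (show b - M ≤ b + d by omega),
        show b + d - (b - M) = M + d by omega]
    _ = b.choose M * (M + b + d).choose b := by rw [← Nat.choose_mul hM, mul_comm]

theorem mul_choose_eq_of_ratio {a b d : ℕ} {S : ℕ → ℕ}
    (hS : ∀ M, S (M + 1) * ((M + 1) * (M + d + 1)) =
      S M * ((M + a + d + 1) * (M + b + d + 1))) (M : ℕ) :
    S M * (b + d).choose b = S 0 * ((M + a + d).choose M * (M + b + d).choose b) := by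
  induction M with
  | zero => simp
  | succ M ih =>
    have ha := Nat.add_one_mul_choose_eq (M + a + d) M
    have hb := Nat.choose_mul_succ_eq (M + b + d) b
    rw [show M + b + d + 1 - b = M + d + 1 by omega] at hb
    rw [show M + 1 + a + d = M + a + d + 1 by omega, show M + 1 + b + d = M + b + d + 1 by omega]
    refine Nat.eq_of_mul_eq_mul_right (show 0 < (M + 1) * (M + d + 1) by positivity) ?_
    calc
      _ = S M * (b + d).choose b * ((M + a + d + 1) * (M + b + d + 1)) := by
        linear_combination (b + d).choose b * hS M
      _ = S 0 * (((M + a + d + 1) * (M + a + d).choose M) *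
            ((M + b + d).choose b * (M + b + d + 1))) := by
        rw [ih]; ring
      _ = _ := by rw [ha, hb]; ring

theorem choose_mul_choose_mul_eq_of_ratio_of_expansion {a b d : ℕ} {S Q : ℕ → ℕ}
    (hS : ∀ M, S (M + 1) * ((M + 1) * (M + d + 1)) =
      S M * ((M + a + d + 1) * (M + b + d + 1)))
    (hSQ : ∀ M, S M = ∑ r ∈ range (M + 1), Q r * (a + b + d + M - r).choose (a + b + d)) (M : ℕ) :
    (M + a + d).choose M * (M + b + d).choose M * Q M = a.choose M * b.choose M * S M := by
  have hQ : (fun M ↦ (b + d).choose b * Q M) =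
      fun M ↦ S 0 * (a.choose M * (b + d).choose (M + d)) := by
    refine eq_of_sum_range_mul_eq (c := fun M r ↦ (a + b + d + M - r).choose (a + b + d))
      (fun M ↦ by simp) fun M ↦ ?_
    simp_rw [mul_assoc, ← mul_sum, ← hSQ, ← mul_assoc (a.choose _), nanjundiah_identity]
    rw [mul_comm, mul_choose_eq_of_ratio hS]
  refine Nat.eq_of_mul_eq_mul_right (Nat.choose_pos (Nat.le_add_right b d)) ?_
  calc
    _ = (M + a + d).choose M * (M + b + d).choose M * ((b + d).choose b * Q M) := by ring
    _ = (M + a + d).choose M * S 0 * a.choose M *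
          ((M + b + d).choose M * (b + d).choose (M + d)) := by rw [congrFun hQ M]; ring
    _ = a.choose M * b.choose M * (S 0 * ((M + a + d).choose M * (M + b + d).choose b)) := by
      rw [choose_mul_choose_add]; ring
    _ = _ := by rw [← mul_choose_eq_of_ratio hS]; ring

/-! ### Standardization -/

theorem bijective_sym_ofFn (α : Type*) [LinearOrder α] (n : ℕ) :
    Function.Bijective fun w : Fin n →o α ↦
      (⟨List.ofFn w, by simp⟩ : Sym α n) := by
  constructor
  · intro w w' h
    have perm : (List.ofFn w).Perm (List.ofFn w') := Multiset.coe_eq_coe.1 (congrArg Subtype.val h)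
    exact DFunLike.coe_injective <| List.ofFn_injective <| perm.eq_of_sortedLE
      (List.sortedLE_ofFn_iff.2 w.monotone) (List.sortedLE_ofFn_iff.2 w'.monotone)
  · rintro ⟨t, rfl⟩
    have length_sort : (t.sort (· ≤ ·)).length = Multiset.card t := t.length_sort _
    have sorted : Monotone (t.sort (· ≤ ·)).get :=
      (t.pairwise_sort (· ≤ ·)).sortedLE.monotone_get
    refine ⟨⟨_, sorted.comp (Fin.cast_strictMono length_sort.symm).monotone⟩, Subtype.ext ?_⟩
    change (List.ofFn fun p ↦ (t.sort (· ≤ ·)).get (p.cast length_sort.symm) : Multiset α) = t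
    rw [← List.ofFn_congr length_sort, List.ofFn_get, t.sort_eq]

theorem natCard_orderHom_fin (α : Type*) [LinearOrder α] (n : ℕ) :
    Nat.card (Fin n →o α) = (Nat.card α).multichoose n :=
  (Nat.card_congr (.ofBijective _ (bijective_sym_ofFn α n))).trans
    (Sym.natCard_sym_eq_multichoose α n)

/-- Weakly increasing words of length `n` in letters `< q`, as maps into `ℕ` subject to a bound and
as maps into `Fin q`. -/
def boundedOrderHomEquiv (n q : ℕ) : {w : Fin n →o ℕ // ∀ p, w p < q} ≃ (Fin n →o Fin q) where
  toFun w := ⟨fun p ↦ ⟨w.1 p, w.2 p⟩, fun _ _ h ↦ w.1.monotone h⟩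
  invFun w := ⟨⟨fun p ↦ w p, fun _ _ h ↦ w.monotone h⟩, fun p ↦ (w p).is_lt⟩

theorem existsUnique_equiv_fin_le_iff {α β : Type*} [Fintype α] [LinearOrder β] {n : ℕ}
    (hn : Fintype.card α = n) {f : α → β} (hf : Function.Injective f) :
    ∃! e : α ≃ Fin n, ∀ x y, e x ≤ e y ↔ f x ≤ f y := by
  let _ : LinearOrder α := LinearOrder.lift' f hf
  let e : α ≃o Fin n := (Fintype.orderIsoFinOfCardEq α hn).symm
  refine ⟨e.toEquiv, fun _ _ ↦ e.le_iff_le, fun e' he' ↦ ?_⟩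
  exact congrArg RelIso.toEquiv (Subsingleton.elim (⟨e', he' _ _⟩ : α ≃o Fin n) e)

/-- The number of `d < p` with `c (d + 1) ≤ c d`. For the column word `c` of a standard filling
these are its descents before position `p`: the positions whose successor lies weakly to the
left. -/
def descentCount (c : ℕ → ℕ) (p : ℕ) : ℕ :=
  Nat.count (fun d ↦ c (d + 1) ≤ c d) p

theorem descentCount_zero (c : ℕ → ℕ) : descentCount c 0 = 0 :=
  Nat.count_zero _

theorem descentCount_succ (c : ℕ → ℕ) (p : ℕ) :
    descentCount c (p + 1) = descentCount c p + if c (p + 1) ≤ c p then 1 else 0 :=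
  Nat.count_succ _ p

theorem descentCount_mono (c : ℕ → ℕ) : Monotone (descentCount c) :=
  Nat.count_monotone _

theorem lt_of_descentCount_eq {c : ℕ → ℕ} {p q : ℕ} (hpq : p < q)
    (h : descentCount c p = descentCount c q) : c p < c q := by
  induction q, hpq using Nat.le_induction with
  | base => grind [descentCount_succ]
  | succ q hq ih =>
    have := descentCount_mono c (show p ≤ q by omega)
    grind [descentCount_succ c q]

theorem exists_descent_of_descentCount_pos {c : ℕ → ℕ} {p : ℕ} (h : 0 < descentCount c p) :
    ∃ q < p, c (q + 1) ≤ c q ∧ descentCount c (q + 1) = descentCount c p ∧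
      descentCount c q = descentCount c p - 1 := by
  induction p with
  | zero => simp [descentCount_zero] at h
  | succ p ih => grind [descentCount_succ c p]

/-- A standard Young tableau of shape `μ`, encoded as a monotone bijective numbering of the cells by
`0, …, μ.card - 1`. -/
abbrev StandardFilling (μ : YoungDiagram) : Type :=
  {s : μ.cells ≃ Fin μ.card // Monotone s}

section Standardization

variable {μ : YoungDiagram}

namespace StandardFilling

variable (s : StandardFilling μ) (w : Fin μ.card →o ℕ)

/-- The columns of the cells of `s`, in the order of their numbers; it is extended by the junk value
`0` beyond `μ.card - 1`. -/
def colWord (p : ℕ) : ℕ :=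
  if hp : p < μ.card then (s.1.symm ⟨p, hp⟩).1.2 else 0

theorem colWord_apply (x : μ.cells) : s.colWord (s.1 x) = x.1.2 := by
  simp [colWord]

/-- The number of descents of `s`. -/
def des : ℕ :=
  descentCount s.colWord (μ.card - 1)

/-- The entry given to the cell with number `p` in the tableau built from `s` and the weakly
increasing word `w`; one unit is added per earlier descent. -/
def letter (p : Fin μ.card) : ℕ :=
  w p + descentCount s.colWord p

theorem letter_mono : Monotone (s.letter w) :=
  fun _ _ h ↦ add_le_add (w.monotone h) (descentCount_mono _ h)

variable {s w} in
theorem eq_of_letter_eq {p q : Fin μ.card} (h : s.letter w p = s.letter w q) : w p = w q := by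
  wlog hpq : p ≤ q generalizing p q
  · exact (this h.symm (le_of_not_ge hpq)).symm
  have := w.monotone hpq
  have := descentCount_mono s.colWord (Fin.le_def.1 hpq)
  unfold letter at h
  omega

variable {s w} in
theorem col_lt_of_letter_eq {x y : μ.cells} (hxy : s.1 x < s.1 y)
    (h : s.letter w (s.1 x) = s.letter w (s.1 y)) : x.1.2 < y.1.2 := by
  rw [← s.colWord_apply x, ← s.colWord_apply y]
  refine lt_of_descentCount_eq hxy (Nat.add_left_cancel (h.trans ?_))
  rw [letter, eq_of_letter_eq h]

/-- The semistandard tableau with standardization `s` whose entries, in the order of the numbers of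
their cells, are the letters of `w` increased by one for each earlier descent. -/
def tableau : SemistandardYoungTableau μ where
  entry i j := if h : (i, j) ∈ μ.cells then s.letter w (s.1 ⟨(i, j), h⟩) else 0
  row_weak' {i j₁ j₂} hj h₂ := by
    have h₁ : (i, j₁) ∈ μ := μ.up_left_mem le_rfl hj.le h₂
    rw [dif_pos ((mem_cells _).2 h₁), dif_pos ((mem_cells _).2 h₂)]
    exact s.letter_mono w (s.2 ⟨le_rfl, hj.le⟩)
  col_strict' {i₁ i₂ j} hi h₂ := by
    have h₁ : (i₁, j) ∈ μ := μ.up_left_mem hi.le le_rfl h₂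
    rw [dif_pos ((mem_cells _).2 h₁), dif_pos ((mem_cells _).2 h₂)]
    have hs : s.1 ⟨(i₁, j), h₁⟩ < s.1 ⟨(i₂, j), h₂⟩ :=
      (s.2.strictMono_of_injective s.1.injective) (Prod.mk_lt_mk_iff_left.2 hi)
    exact lt_of_le_of_ne (s.letter_mono w hs.le) fun h ↦ (col_lt_of_letter_eq hs h).false
  zeros' h := dif_neg h

theorem tableau_apply (x : μ.cells) : s.tableau w x.1.1 x.1.2 = s.letter w (s.1 x) :=
  dif_pos x.2

end StandardFilling

/-- The key by which standardization orders the cells of `T`: by entry, and from left to right among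
equal entries. -/
def readingKey (T : SemistandardYoungTableau μ) (x : μ.cells) : ℕ ×ₗ ℕ :=
  toLex (T x.1.1 x.1.2, x.1.2)

theorem readingKey_injective (T : SemistandardYoungTableau μ) :
    Function.Injective (readingKey T) := by
  rintro ⟨⟨i, j⟩, h⟩ ⟨⟨i', j'⟩, h'⟩ hkey
  obtain ⟨hT, rfl⟩ : T i j = T i' j' ∧ j = j' := Prod.ext_iff.1 (toLex.injective hkey)
  obtain hi | rfl | hi := lt_trichotomy i i'
  · exact absurd hT (T.col_strict hi h').ne
  · rfl
  · exact absurd hT (T.col_strict hi h).ne'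

theorem entry_le_entry (T : SemistandardYoungTableau μ) {x y : ℕ × ℕ} (hxy : x ≤ y) (hy : y ∈ μ) :
    T x.1 x.2 ≤ T y.1 y.2 :=
  (T.row_weak_of_le hxy.2 (μ.up_left_mem hxy.1 le_rfl hy)).trans (T.col_weak hxy.1 hy)

theorem StandardFilling.le_iff_readingKey_le (s : StandardFilling μ) (w : Fin μ.card →o ℕ)
    (x y : μ.cells) :
    s.1 x ≤ s.1 y ↔ readingKey (s.tableau w) x ≤ readingKey (s.tableau w) y := by
  have lt_of_lt {x y : μ.cells} (h : s.1 x < s.1 y) :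
      readingKey (s.tableau w) x < readingKey (s.tableau w) y := by
    simp_rw [readingKey, tableau_apply, Prod.Lex.toLex_lt_toLex]
    exact (s.letter_mono w h.le).lt_or_eq.imp_right fun heq ↦ ⟨heq, col_lt_of_letter_eq h heq⟩
  refine ⟨fun h ↦ ?_, fun h ↦ le_of_not_gt fun hlt ↦ (lt_of_lt hlt).not_ge h⟩
  obtain hlt | heq := h.lt_or_eq
  · exact (lt_of_lt hlt).le
  · rw [s.1.injective heq]

theorem StandardFilling.tableau_injective :
    Function.Injective fun x : StandardFilling μ × (Fin μ.card →o ℕ) ↦ x.1.tableau x.2 := by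
  rintro ⟨s, w⟩ ⟨s', w'⟩ (h : s.tableau w = s'.tableau w')
  obtain rfl : s = s' := Subtype.ext <|
    (existsUnique_equiv_fin_le_iff (Fintype.card_coe μ.cells)
      (readingKey_injective (s.tableau w))).unique
      (s.le_iff_readingKey_le w) (h ▸ s'.le_iff_readingKey_le w')
  refine Prod.ext rfl (OrderHom.ext _ _ (funext fun p ↦ ?_))
  have hp := s.tableau_apply w (s.1.symm p)
  rw [h, tableau_apply] at hp
  simpa [letter] using hp.symm

theorem exists_standardFilling_readingKey (T : SemistandardYoungTableau μ) :
    ∃ s : StandardFilling μ, ∀ x y, s.1 x ≤ s.1 y ↔ readingKey T x ≤ readingKey T y := by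
  obtain ⟨e, he, -⟩ :=
    existsUnique_equiv_fin_le_iff (Fintype.card_coe μ.cells) (readingKey_injective T)
  refine ⟨⟨e, fun x y hxy ↦ (he x y).2 ?_⟩, he⟩
  exact Prod.Lex.toLex_mono ⟨entry_le_entry T hxy ((mem_cells _).1 y.2), hxy.2⟩

theorem add_descentCount_le {s : StandardFilling μ} {T : SemistandardYoungTableau μ}
    (hs : ∀ x y, s.1 x ≤ s.1 y ↔ readingKey T x ≤ readingKey T y) {x y : μ.cells}
    (hxy : s.1 x ≤ s.1 y) :
    T x.1.1 x.1.2 + descentCount s.colWord (s.1 y) ≤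
      T y.1.1 y.1.2 + descentCount s.colWord (s.1 x) := by
  suffices ∀ q, (s.1 x : ℕ) ≤ q → ∀ hq : q < μ.card,
      T x.1.1 x.1.2 + descentCount s.colWord q ≤
        T (s.1.symm ⟨q, hq⟩).1.1 (s.1.symm ⟨q, hq⟩).1.2 + descentCount s.colWord (s.1 x) by
    simpa using this (s.1 y) hxy (s.1 y).2
  intro q hpq
  induction q, hpq using Nat.le_induction with
  | base => simp
  | succ q _ ih =>
    intro hq
    have hq' : q < μ.card := by omega
    have key_lt : readingKey T (s.1.symm ⟨q, hq'⟩) < readingKey T (s.1.symm ⟨q + 1, hq⟩) := by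
      rw [← not_le, ← hs]
      simp
    have hqx := ih hq'
    simp only [readingKey, Prod.Lex.toLex_lt_toLex] at key_lt
    simp only [descentCount_succ, StandardFilling.colWord, dif_pos hq, dif_pos hq'] at hqx ⊢
    split_ifs <;> omega

theorem StandardFilling.tableau_surjective :
    Function.Surjective fun x : StandardFilling μ × (Fin μ.card →o ℕ) ↦ x.1.tableau x.2 := by
  intro T
  obtain ⟨s, hs⟩ := exists_standardFilling_readingKey T
  have descentCount_le (x : μ.cells) : descentCount s.colWord (s.1 x) ≤ T x.1.1 x.1.2 := by
    have h₀ : 0 < μ.card := (Nat.zero_le _).trans_lt (s.1 x).2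
    have := add_descentCount_le hs (x := s.1.symm ⟨0, h₀⟩) (y := x) (by simp [Fin.le_def])
    rw [s.1.apply_symm_apply, descentCount_zero] at this
    omega
  let excess (p : Fin μ.card) : ℕ :=
    T (s.1.symm p).1.1 (s.1.symm p).1.2 - descentCount s.colWord p
  have excess_mono : Monotone excess := by
    intro p q hpq
    have hle := add_descentCount_le hs (x := s.1.symm p) (y := s.1.symm q) (by simpa using hpq)
    have hp := descentCount_le (s.1.symm p)
    simp only [Equiv.apply_symm_apply] at hle hp
    simp only [excess]
    omega
  refine ⟨(s, ⟨excess, excess_mono⟩), SemistandardYoungTableau.ext fun i j ↦ ?_⟩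
  by_cases h : (i, j) ∈ μ
  · refine (s.tableau_apply _ ⟨(i, j), h⟩).trans ?_
    simpa [letter, excess] using Nat.sub_add_cancel (descentCount_le ⟨(i, j), h⟩)
  · rw [SemistandardYoungTableau.zeros _ h, T.zeros h]

/-- Standardization: a semistandard tableau amounts to a standard tableau together with a weakly
increasing word recording by how much its entries exceed the number of preceding descents. -/
noncomputable def standardizationEquiv (μ : YoungDiagram) :
    StandardFilling μ × (Fin μ.card →o ℕ) ≃ SemistandardYoungTableau μ :=
  .ofBijective (fun x ↦ x.1.tableau x.2)
    ⟨StandardFilling.tableau_injective, StandardFilling.tableau_surjective⟩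

namespace StandardFilling

variable {s : StandardFilling μ} {w : Fin μ.card →o ℕ}

theorem entryLE_tableau_iff {m : ℕ} : EntryLE μ (s.tableau w) m ↔ ∀ p, s.letter w p < m := by
  refine ⟨fun h p ↦ ?_, fun h i j hij ↦ ?_⟩
  · have := h _ _ ((mem_cells _).1 (s.1.symm p).2)
    rwa [tableau_apply, Equiv.apply_symm_apply] at this
  · exact (s.tableau_apply w ⟨(i, j), hij⟩).trans_lt (h _)

theorem entryLE_tableau_iff_forall_lt (hμ : 0 < μ.card) {m : ℕ} :
    EntryLE μ (s.tableau w) m ↔ ∀ p, w p < m - s.des := by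
  rw [entryLE_tableau_iff]
  refine ⟨fun h p ↦ ?_, fun h p ↦ ?_⟩
  · have hlast := h ⟨μ.card - 1, by omega⟩
    have := w.monotone (show p ≤ ⟨μ.card - 1, by omega⟩ from Nat.le_sub_one_of_lt p.2)
    change w _ + s.des < m at hlast
    omega
  · have := h p
    have := descentCount_mono s.colWord (Nat.le_sub_one_of_lt p.2)
    unfold des at *
    unfold letter
    omega

theorem eq_bot_of_isQY (h : IsQY μ (s.tableau w)) : w = ⊥ := by
  suffices ∀ v p, s.letter w p = v → w p = 0 from OrderHom.ext _ _ (funext fun p ↦ this _ p rfl)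
  intro v
  induction v using Nat.strong_induction_on with
  | _ v ih =>
    intro p hp
    obtain rfl | hv := v.eq_zero_or_pos
    · exact (Nat.add_eq_zero_iff.1 hp).1
    obtain ⟨i, j, i', j', hx, hy, hTx, hTy, hcol⟩ := h v hv ⟨_, _, (mem_cells _).1 (s.1.symm p).2,
      by rwa [tableau_apply, Equiv.apply_symm_apply]⟩
    rw [s.tableau_apply w ⟨(i, j), hx⟩] at hTx
    rw [s.tableau_apply w ⟨(i', j'), hy⟩] at hTy
    set x : μ.cells := ⟨(i, j), hx⟩
    set y : μ.cells := ⟨(i', j'), hy⟩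
    have hyx : s.1 y < s.1 x := (s.letter_mono w).reflect_lt (by omega)
    have hwy := ih _ (by omega) _ hTy
    have hwp := eq_of_letter_eq (hp.trans hTx.symm)
    have descent_between : descentCount s.colWord (s.1 y) < descentCount s.colWord (s.1 x) := by
      refine (descentCount_mono _ hyx.le).lt_of_ne fun heq ↦ hcol.not_gt ?_
      simpa only [colWord_apply] using lt_of_descentCount_eq hyx heq
    unfold letter at hTx hTy
    omega

theorem letter_bot (p : Fin μ.card) : s.letter ⊥ p = descentCount s.colWord p :=
  Nat.zero_add _

theorem isQY_tableau_bot : IsQY μ (s.tableau ⊥) := by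
  rintro v hv ⟨i, j, hij, rfl⟩
  rw [s.tableau_apply ⊥ ⟨(i, j), hij⟩, letter_bot] at hv ⊢
  set x : μ.cells := ⟨(i, j), hij⟩
  obtain ⟨q, hqx, hcol, hsucc, hq⟩ := exists_descent_of_descentCount_pos hv
  have hq₁ : q + 1 < μ.card := by omega
  have hq₀ : q < μ.card := by omega
  refine ⟨_, _, _, _, (mem_cells _).1 (s.1.symm ⟨q + 1, hq₁⟩).2,
    (mem_cells _).1 (s.1.symm ⟨q, hq₀⟩).2, ?_, ?_, ?_⟩
  · simpa only [tableau_apply, Equiv.apply_symm_apply, letter_bot] using hsucc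
  · simpa only [tableau_apply, Equiv.apply_symm_apply, letter_bot] using hq
  · simpa only [colWord, dif_pos hq₁, dif_pos hq₀] using hcol

theorem isQY_tableau_iff : IsQY μ (s.tableau w) ↔ w = ⊥ :=
  ⟨eq_bot_of_isQY, fun h ↦ h ▸ isQY_tableau_bot⟩

theorem maxEq_tableau_bot_iff (hμ : 0 < μ.card) {r : ℕ} :
    MaxEq μ (s.tableau ⊥) (r + 1) ↔ s.des = r := by
  rw [MaxEq, entryLE_tableau_iff_forall_lt hμ]
  refine ⟨fun ⟨hlt, i, j, hij, hT⟩ ↦ ?_, fun h ↦ ?_⟩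
  · have hdes : 0 < r + 1 - s.des := hlt ⟨0, hμ⟩
    rw [s.tableau_apply ⊥ ⟨(i, j), hij⟩, letter_bot] at hT
    have : descentCount s.colWord (s.1 ⟨(i, j), hij⟩) ≤ s.des :=
      descentCount_mono _ (Nat.le_sub_one_of_lt (Fin.is_lt _))
    omega
  · subst h
    refine ⟨fun _ ↦ Nat.sub_pos_of_lt s.des.lt_succ_self, _, _,
      (mem_cells _).1 (s.1.symm ⟨μ.card - 1, by omega⟩).2, ?_⟩
    rw [tableau_apply, Equiv.apply_symm_apply, letter_bot, Nat.add_sub_cancel, des]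

end StandardFilling

theorem qytEq_succ_eq_card_des_eq (hμ : 0 < μ.card) (r : ℕ) :
    QYTeq μ (r + 1) = #{s : StandardFilling μ | s.des = r} := by
  have qy_iff (x : StandardFilling μ × (Fin μ.card →o ℕ)) :
      x.1.des = r ∧ x.2 = ⊥ ↔ IsQY μ (standardizationEquiv μ x) ∧
        MaxEq μ (standardizationEquiv μ x) (r + 1) := by
    obtain ⟨s, w⟩ := x
    change s.des = r ∧ w = ⊥ ↔ IsQY μ (s.tableau w) ∧ MaxEq μ (s.tableau w) (r + 1)
    rw [StandardFilling.isQY_tableau_iff, and_comm]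
    exact and_congr_right fun h ↦ h ▸ (StandardFilling.maxEq_tableau_bot_iff hμ).symm
  rw [QYTeq, ← Nat.card_congr ((standardizationEquiv μ).subtypeEquiv qy_iff),
    Nat.card_congr (Equiv.subtypeProdEquivProd
      (p := fun s : StandardFilling μ ↦ s.des = r) (q := fun w : Fin μ.card →o ℕ ↦ w = ⊥)),
    Nat.card_prod, Nat.card_eq_fintype_card, Fintype.card_subtype, Nat.card_unique, mul_one]

theorem ssytLe_eq_sum_multichoose (hμ : 0 < μ.card) (m : ℕ) :
    SSYTle μ m = ∑ s : StandardFilling μ, (m - s.des).multichoose μ.card := by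
  have entryLE_iff (x : StandardFilling μ × (Fin μ.card →o ℕ)) :
      (∀ p, x.2 p < m - x.1.des) ↔ EntryLE μ (standardizationEquiv μ x) m :=
    (StandardFilling.entryLE_tableau_iff_forall_lt hμ).symm
  have (q : ℕ) : Finite {w : Fin μ.card →o ℕ // ∀ p, w p < q} :=
    have : Finite (Fin μ.card →o Fin q) := DFunLike.finite _
    .of_equiv _ (boundedOrderHomEquiv μ.card q).symm
  rw [SSYTle, ← Nat.card_congr ((standardizationEquiv μ).subtypeEquiv entryLE_iff),
    Nat.card_congr (Equiv.subtypeProdEquivSigmaSubtype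
      fun (s : StandardFilling μ) (w : Fin μ.card →o ℕ) ↦ ∀ p, w p < m - s.des),
    Nat.card_sigma]
  refine sum_congr rfl fun s _ ↦ ?_
  rw [Nat.card_congr (boundedOrderHomEquiv _ _), natCard_orderHom_fin, Nat.card_fin]

theorem ssytLe_eq_sum_QYTeq (hμ : 0 < μ.card) (m : ℕ) :
    SSYTle μ m =
      ∑ r ∈ range m, QYTeq μ (r + 1) * (μ.card + (m - 1 - r)).choose μ.card := by
  have des_lt (s : StandardFilling μ) (h : (m - s.des).multichoose μ.card ≠ 0) :
      s.des ∈ range m := by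
    contrapose! h
    obtain ⟨k, hk⟩ := Nat.exists_eq_succ_of_ne_zero hμ.ne'
    rw [Nat.sub_eq_zero_of_le (by simpa using h), hk, Nat.multichoose_zero_succ]
  rw [ssytLe_eq_sum_multichoose hμ, ← sum_filter_of_ne fun s _ ↦ des_lt s,
    ← sum_fiberwise_eq_sum_filter]
  refine sum_congr rfl fun r hr ↦ ?_
  have := mem_range.1 hr
  rw [sum_congr rfl fun s hs ↦ by rw [(mem_filter.1 hs).2], sum_const, smul_eq_mul,
    qytEq_succ_eq_card_des_eq hμ, Nat.multichoose_eq,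
    show m - r + μ.card - 1 = μ.card + (m - 1 - r) by omega]

end Standardization

/-! ### The branching rule -/

section Branching

variable {μ ν : YoungDiagram} {m : ℕ}

theorem row_le_entry (T : SemistandardYoungTableau μ) {i j : ℕ} (h : (i, j) ∈ μ) : i ≤ T i j := by
  induction i with
  | zero => exact Nat.zero_le _
  | succ i ih =>
    exact (ih (μ.up_left_mem i.le_succ le_rfl h)).trans_lt (T.col_strict i.lt_succ_self h)

theorem EntryLE.rowLen_eq_zero {T : SemistandardYoungTableau μ} (h : EntryLE μ T m) :
    μ.rowLen m = 0 := by
  by_contra hm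
  have hmem : (m, 0) ∈ μ := mem_iff_lt_rowLen.2 (Nat.pos_of_ne_zero hm)
  exact (row_le_entry T hmem).not_gt (h m 0 hmem)

theorem qytEq_eq_zero_of_mem (h : (m, 0) ∈ μ) : QYTeq μ m = 0 := by
  have : IsEmpty {T : SemistandardYoungTableau μ // IsQY μ T ∧ MaxEq μ T m} :=
    ⟨fun T ↦ (mem_iff_lt_rowLen.1 h).ne' T.2.2.1.rowLen_eq_zero⟩
  exact Nat.card_of_isEmpty

instance finite_entryLE (μ : YoungDiagram) (m : ℕ) :
    Finite {T : SemistandardYoungTableau μ // EntryLE μ T m} := by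
  refine .of_injective (fun T (x : μ.cells) ↦ (⟨T.1 x.1.1 x.1.2, T.2 _ _ x.2⟩ : Fin m)) ?_
  refine fun T T' h ↦ Subtype.ext (SemistandardYoungTableau.ext fun i j ↦ ?_)
  by_cases hij : (i, j) ∈ μ
  · exact congrArg Fin.val (congrFun h ⟨(i, j), hij⟩)
  · rw [T.1.zeros hij, T'.1.zeros hij]

/-- The shape occupied by the entries of `T` that are `< m`. -/
def subshape (T : SemistandardYoungTableau μ) (m : ℕ) : YoungDiagram where
  cells := {x ∈ μ.cells | T x.1 x.2 < m}
  isLowerSet x y hyx hx := by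
    simp only [coe_filter, Set.mem_ofPred_eq, mem_cells] at hx ⊢
    exact ⟨μ.isLowerSet hyx hx.1, (entry_le_entry T hyx hx.1).trans_lt hx.2⟩

theorem mem_subshape {T : SemistandardYoungTableau μ} {i j : ℕ} :
    (i, j) ∈ subshape T m ↔ (i, j) ∈ μ ∧ T i j < m := by
  rw [← mem_cells, subshape, mem_filter, mem_cells]

/-- `μ / ν` is a horizontal strip, that is, a skew shape with at most one cell per column: the cell
above any cell of `μ` lies in `ν`. -/
def IsHorizontalStrip (μ ν : YoungDiagram) : Prop :=
  ν ≤ μ ∧ ∀ i j, (i + 1, j) ∈ μ → (i, j) ∈ ν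

theorem EntryLE.isHorizontalStrip_subshape {T : SemistandardYoungTableau μ}
    (h : EntryLE μ T (m + 1)) : IsHorizontalStrip μ (subshape T m) := by
  refine ⟨fun x hx ↦ (mem_subshape.1 hx).1, fun i j hij ↦ mem_subshape.2 ?_⟩
  exact ⟨μ.up_left_mem i.le_succ le_rfl hij,
    (T.col_strict i.lt_succ_self hij).trans_le (Nat.le_of_lt_succ (h _ _ hij))⟩

/-- The tableau of shape `ν` formed by the entries of `T` in the cells of `ν ≤ μ`. -/
def restrictShape (h : ν ≤ μ) (T : SemistandardYoungTableau μ) : SemistandardYoungTableau ν where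
  entry i j := if (i, j) ∈ ν then T i j else 0
  row_weak' hj hmem := by
    rw [if_pos hmem, if_pos (ν.up_left_mem le_rfl hj.le hmem)]
    exact T.row_weak hj (h hmem)
  col_strict' hi hmem := by
    rw [if_pos hmem, if_pos (ν.up_left_mem hi.le le_rfl hmem)]
    exact T.col_strict hi (h hmem)
  zeros' hij := if_neg hij

theorem restrictShape_apply (h : ν ≤ μ) (T : SemistandardYoungTableau μ) {i j : ℕ}
    (hij : (i, j) ∈ ν) : restrictShape h T i j = T i j :=
  show (if (i, j) ∈ ν then T i j else 0) = T i j from if_pos hij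

theorem entryLE_restrictShape (h : ν ≤ μ) {T : SemistandardYoungTableau μ}
    (hT : subshape T m = ν) : EntryLE ν (restrictShape h T) m := by
  subst hT
  exact fun i j hij ↦ (restrictShape_apply h T hij).trans_lt (mem_subshape.1 hij).2

/-- The tableau of shape `μ` obtained from `T` by filling the horizontal strip `μ / ν` with `m`. -/
def extendByStrip (h : IsHorizontalStrip μ ν) (T : SemistandardYoungTableau ν)
    (hT : EntryLE ν T m) : SemistandardYoungTableau μ where
  entry i j := if (i, j) ∈ ν then T i j else if (i, j) ∈ μ then m else 0
  row_weak' {i j₁ j₂} hj h₂ := by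
    by_cases hν : (i, j₂) ∈ ν
    · rw [if_pos hν, if_pos (ν.up_left_mem le_rfl hj.le hν)]
      exact T.row_weak hj hν
    · rw [if_neg hν, if_pos h₂]
      split_ifs with h₁
      exacts [(hT _ _ h₁).le, le_rfl, Nat.zero_le _]
  col_strict' {i₁ i₂ j} hi h₂ := by
    have h₁ : (i₁, j) ∈ ν := h.2 _ _ (μ.up_left_mem hi le_rfl h₂)
    by_cases hν : (i₂, j) ∈ ν
    · rw [if_pos h₁, if_pos hν]
      exact T.col_strict hi hν
    · rw [if_pos h₁, if_neg hν, if_pos h₂]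
      exact hT _ _ h₁
  zeros' hij := by rw [if_neg fun hν ↦ hij (h.1 hν), if_neg hij]

theorem extendByStrip_apply_of_mem (h : IsHorizontalStrip μ ν) {T : SemistandardYoungTableau ν}
    (hT : EntryLE ν T m) {i j : ℕ} (hij : (i, j) ∈ ν) : extendByStrip h T hT i j = T i j :=
  if_pos hij

theorem extendByStrip_apply_of_notMem (h : IsHorizontalStrip μ ν) {T : SemistandardYoungTableau ν}
    (hT : EntryLE ν T m) {i j : ℕ} (hμ : (i, j) ∈ μ) (hν : (i, j) ∉ ν) :
    extendByStrip h T hT i j = m :=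
  (if_neg hν).trans (if_pos hμ)

theorem entryLE_extendByStrip (h : IsHorizontalStrip μ ν) {T : SemistandardYoungTableau ν}
    (hT : EntryLE ν T m) : EntryLE μ (extendByStrip h T hT) (m + 1) := by
  intro i j hμ
  by_cases hν : (i, j) ∈ ν
  · rw [extendByStrip_apply_of_mem h hT hν]
    exact (hT i j hν).trans m.lt_succ_self
  · rw [extendByStrip_apply_of_notMem h hT hμ hν]
    exact m.lt_succ_self

theorem subshape_extendByStrip (h : IsHorizontalStrip μ ν) {T : SemistandardYoungTableau ν}
    (hT : EntryLE ν T m) : subshape (extendByStrip h T hT) m = ν := by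
  refine SetLike.ext fun ⟨i, j⟩ ↦ mem_subshape.trans ⟨fun ⟨hμ, hlt⟩ ↦ ?_, fun hν ↦ ⟨h.1 hν, ?_⟩⟩
  · by_contra hν
    exact hlt.ne (extendByStrip_apply_of_notMem h _ hμ hν)
  · rw [extendByStrip_apply_of_mem h hT hν]
    exact hT i j hν

/-- Removing the cells with entry `m` identifies the tableaux of shape `μ` with entries `≤ m` whose
smaller entries occupy `ν` with the tableaux of shape `ν` with entries `< m`. -/
def removeStripEquiv (h : IsHorizontalStrip μ ν) (m : ℕ) :
    {T : SemistandardYoungTableau μ // EntryLE μ T (m + 1) ∧ subshape T m = ν} ≃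
      {T : SemistandardYoungTableau ν // EntryLE ν T m} where
  toFun T := ⟨restrictShape h.1 T.1, entryLE_restrictShape h.1 T.2.2⟩
  invFun T := ⟨extendByStrip h T.1 T.2, entryLE_extendByStrip h T.2, subshape_extendByStrip h T.2⟩
  left_inv := by
    rintro ⟨T, hT, rfl⟩
    refine Subtype.ext (SemistandardYoungTableau.ext fun i j ↦ ?_)
    change extendByStrip h (restrictShape h.1 T) (entryLE_restrictShape h.1 rfl) i j = T i j
    by_cases hν : (i, j) ∈ subshape T m
    · rw [extendByStrip_apply_of_mem h _ hν, restrictShape_apply h.1 T hν]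
    by_cases hμ : (i, j) ∈ μ
    · have : m ≤ T i j := le_of_not_gt fun hlt ↦ hν (mem_subshape.2 ⟨hμ, hlt⟩)
      rw [extendByStrip_apply_of_notMem h _ hμ hν]
      exact this.antisymm (Nat.le_of_lt_succ (hT i j hμ))
    · rw [SemistandardYoungTableau.zeros _ hμ, T.zeros hμ]
  right_inv T := by
    refine Subtype.ext (SemistandardYoungTableau.ext fun i j ↦ ?_)
    by_cases hν : (i, j) ∈ ν
    · exact (restrictShape_apply h.1 _ hν).trans (extendByStrip_apply_of_mem h T.2 hν)
    · rw [SemistandardYoungTableau.zeros _ hν, T.1.zeros hν]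

/-- The lengths of the first `m` rows of `μ`, from the bottom up: with this orientation they form a
monotone sequence. -/
def revRowLens (m : ℕ) (μ : YoungDiagram) (i : Fin m) : ℕ :=
  μ.rowLen i.rev

theorem revRowLens_mono (m : ℕ) (μ : YoungDiagram) : Monotone (revRowLens m μ) :=
  fun _ _ h ↦ μ.rowLen_anti _ _ (Fin.rev_le_rev.2 h)

/-- The Young diagram whose rows, from the bottom up, have the lengths `r`. For a sequence `r` that
is not monotone, this is the smallest diagram with rows at least that long. -/
def ofRevRowLens (r : Fin m → ℕ) : YoungDiagram where
  cells := univ.biUnion fun i : Fin m ↦ Iic (i.rev : ℕ) ×ˢ range (r i)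
  isLowerSet x y hyx hx := by
    simp only [coe_biUnion, Set.mem_iUnion, mem_coe, mem_product, mem_Iic, mem_range] at hx ⊢
    obtain ⟨i, hi, hrow, hcol⟩ := hx
    exact ⟨i, hi, hyx.1.trans hrow, hyx.2.trans_lt hcol⟩

theorem mem_ofRevRowLens {r : Fin m → ℕ} {k j : ℕ} :
    (k, j) ∈ ofRevRowLens r ↔ ∃ i : Fin m, k ≤ i.rev ∧ j < r i := by
  simp [← mem_cells, ofRevRowLens]

theorem rowLen_ofRevRowLens (r : Fin m → ℕ) : (ofRevRowLens r).rowLen m = 0 := by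
  by_contra h
  obtain ⟨i, hi, -⟩ := mem_ofRevRowLens.1 (mem_iff_lt_rowLen.2 (Nat.pos_of_ne_zero h))
  exact hi.not_gt i.rev.is_lt

theorem revRowLens_ofRevRowLens {r : Fin m → ℕ} (hr : Monotone r) :
    revRowLens m (ofRevRowLens r) = r := by
  refine funext fun i ↦ eq_of_forall_lt_iff fun j ↦ ?_
  rw [revRowLens, ← mem_iff_lt_rowLen, mem_ofRevRowLens]
  exact ⟨fun ⟨k, hk, hj⟩ ↦ hj.trans_le (hr (Fin.rev_le_rev.1 hk)), fun hj ↦ ⟨i, le_rfl, hj⟩⟩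

theorem ofRevRowLens_revRowLens (h : μ.rowLen m = 0) : ofRevRowLens (revRowLens m μ) = μ := by
  refine SetLike.ext fun ⟨k, j⟩ ↦ mem_ofRevRowLens.trans ⟨fun ⟨i, hk, hj⟩ ↦ ?_, fun hmem ↦ ?_⟩
  · exact μ.up_left_mem hk le_rfl (mem_iff_lt_rowLen.2 hj)
  · have hk : k < m := by
      by_contra! hmk
      have := μ.rowLen_anti m k hmk
      have := mem_iff_lt_rowLen.1 hmem
      omega
    exact ⟨Fin.rev ⟨k, hk⟩, by simp, by simpa [revRowLens] using mem_iff_lt_rowLen.1 hmem⟩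

theorem monotone_of_mem_Icc_castSucc_succ {r : Fin (m + 1) → ℕ} (hr : Monotone r)
    {q : Fin m → ℕ} (hq : q ∈ Icc (r ∘ Fin.castSucc) (r ∘ Fin.succ)) : Monotone q := by
  rw [mem_Icc] at hq
  intro i j hij
  obtain hlt | rfl := hij.lt_or_eq
  · exact (hq.2 i).trans ((hr (Fin.succ_le_castSucc_iff.2 hlt)).trans (hq.1 j))
  · rfl

theorem isHorizontalStrip_iff_rowLen :
    IsHorizontalStrip μ ν ↔ ∀ i, μ.rowLen (i + 1) ≤ ν.rowLen i ∧ ν.rowLen i ≤ μ.rowLen i := by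
  have rowLen_le_iff (κ κ' : YoungDiagram) (i i' : ℕ) :
      κ.rowLen i ≤ κ'.rowLen i' ↔ ∀ j, (i, j) ∈ κ → (i', j) ∈ κ' := by
    simp only [mem_iff_lt_rowLen]
    exact ⟨fun h j hj ↦ hj.trans_le h, le_of_forall_lt⟩
  simp_rw [rowLen_le_iff, IsHorizontalStrip]
  exact ⟨fun h i ↦ ⟨h.2 i, fun j hj ↦ h.1 hj⟩, fun h ↦ ⟨fun x ↦ (h x.1).2 x.2, fun i ↦ (h i).1⟩⟩

theorem isHorizontalStrip_iff_revRowLens_mem_Icc (hμ : μ.rowLen (m + 1) = 0)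
    (hν : ν.rowLen m = 0) :
    IsHorizontalStrip μ ν ↔ revRowLens m ν ∈
      Icc (revRowLens (m + 1) μ ∘ Fin.castSucc) (revRowLens (m + 1) μ ∘ Fin.succ) := by
  simp_rw [isHorizontalStrip_iff_rowLen, mem_Icc, Pi.le_def, ← forall_and, Function.comp_apply,
    revRowLens, Fin.rev_castSucc, Fin.rev_succ, Fin.val_succ, Fin.val_castSucc]
  refine ⟨fun h i ↦ h i.rev, fun h i ↦ ?_⟩
  obtain hi | hi := lt_or_ge i m
  · simpa using h (Fin.rev ⟨i, hi⟩)
  · have := μ.rowLen_anti (m + 1) (i + 1) (by omega)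
    have := ν.rowLen_anti m i hi
    omega

theorem ssytLe_succ_eq_sum (hμ : μ.rowLen (m + 1) = 0) :
    SSYTle μ (m + 1) =
      ∑ r ∈ Icc (revRowLens (m + 1) μ ∘ Fin.castSucc) (revRowLens (m + 1) μ ∘ Fin.succ),
        SSYTle (ofRevRowLens r) m := by
  have rowLen_subshape (T : SemistandardYoungTableau μ) : (subshape T m).rowLen m = 0 := by
    by_contra h
    obtain ⟨hmem, hlt⟩ := mem_subshape.1 (mem_iff_lt_rowLen.2 (Nat.pos_of_ne_zero h))
    exact (row_le_entry T hmem).not_gt hlt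
  let innerRowLens (T : {T : SemistandardYoungTableau μ // EntryLE μ T (m + 1)}) :
      Icc (revRowLens (m + 1) μ ∘ Fin.castSucc) (revRowLens (m + 1) μ ∘ Fin.succ) :=
    ⟨revRowLens m (subshape T.1 m), (isHorizontalStrip_iff_revRowLens_mem_Icc hμ
      (rowLen_subshape T.1)).1 T.2.isHorizontalStrip_subshape⟩
  rw [SSYTle, ← Nat.card_congr (Equiv.sigmaFiberEquiv innerRowLens), Nat.card_sigma]
  refine (sum_congr rfl fun ⟨r, hr⟩ _ ↦ ?_).trans (sum_coe_sort _ fun r ↦ SSYTle (ofRevRowLens r) m)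
  have r_mono := monotone_of_mem_Icc_castSucc_succ (revRowLens_mono _ μ) hr
  have strip : IsHorizontalStrip μ (ofRevRowLens r) :=
    (isHorizontalStrip_iff_revRowLens_mem_Icc hμ (rowLen_ofRevRowLens r)).2
      (by rwa [revRowLens_ofRevRowLens r_mono])
  have fiber_iff (T : {T : SemistandardYoungTableau μ // EntryLE μ T (m + 1)}) :
      innerRowLens T = ⟨r, hr⟩ ↔ subshape T.1 m = ofRevRowLens r := by
    refine Subtype.ext_iff.trans ⟨fun h ↦ ?_, fun h ↦ ?_⟩
    · exact (ofRevRowLens_revRowLens (rowLen_subshape T.1)).symm.trans (congrArg _ h)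
    · exact (congrArg _ h).trans (revRowLens_ofRevRowLens r_mono)
  exact Nat.card_congr <| ((Equiv.subtypeEquivRight fiber_iff).trans
    (Equiv.subtypeSubtypeEquivSubtypeInter _ fun T ↦ subshape T m = ofRevRowLens r)).trans
    (removeStripEquiv strip m)

end Branching

/-! ### The determinantal formula -/

section Determinant

open Matrix

/-- The matrix whose determinant counts the tableaux with entries `< m` and rows of lengths
`r (m - 1), …, r 0` for monotone `r`. -/
def shiftedBinomMatrix {m : ℕ} (r : Fin m → ℕ) : Matrix (Fin m) (Fin m) ℤ :=
  .of fun i j ↦ ((r i + i).choose j : ℤ)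

theorem sum_Icc_add_choose {a b : ℕ} (hab : a ≤ b) (i j : ℕ) :
    ∑ x ∈ Icc a b, ((x + i).choose j : ℤ) =
      (b + (i + 1)).choose (j + 1) - (a + i).choose (j + 1) := by
  induction b, hab using Nat.le_induction with
  | base =>
    rw [Icc_self, sum_singleton, ← add_assoc, Nat.choose_succ_succ]
    push_cast
    ring
  | succ b hb ih =>
    rw [sum_Icc_succ_top (hb.trans b.le_succ), ih, show b + 1 + (i + 1) = b + 1 + i + 1 by ring,
      Nat.choose_succ_succ, show b + 1 + i = b + (i + 1) by ring]
    push_cast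
    ring

theorem det_shiftedBinomMatrix_succ {m : ℕ} {r : Fin (m + 1) → ℕ} (hr : Monotone r) :
    (shiftedBinomMatrix r).det =
      ∑ q ∈ Icc (r ∘ Fin.castSucc) (r ∘ Fin.succ), (shiftedBinomMatrix q).det := by
  let rowDiff : Matrix (Fin (m + 1)) (Fin (m + 1)) ℤ := .of <| Fin.cases (shiftedBinomMatrix r 0)
    fun i j ↦ shiftedBinomMatrix r i.succ j - shiftedBinomMatrix r i.castSucc j
  have det_rowDiff : (shiftedBinomMatrix r).det = rowDiff.det :=
    det_eq_of_forall_row_eq_smul_add_pred (fun _ ↦ 1) (fun _ ↦ rfl) fun i j ↦ by simp [rowDiff]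
  have rowDiff_zero_zero : rowDiff 0 0 = 1 := by simp [rowDiff, shiftedBinomMatrix]
  have rowDiff_succ_zero (i : Fin m) : rowDiff i.succ 0 = 0 := by
    simp [rowDiff, shiftedBinomMatrix]
  have minor_eq : rowDiff.submatrix (Fin.succAbove 0) Fin.succ = .of fun i : Fin m ↦
      ∑ x ∈ Icc (r i.castSucc) (r i.succ), fun j : Fin m ↦ ((x + i).choose j : ℤ) := by
    ext i j
    rw [of_apply, Finset.sum_apply, sum_Icc_add_choose (hr i.castSucc_le_succ)]
    simp [rowDiff, shiftedBinomMatrix]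
  rw [det_rowDiff, det_succ_column_zero, Fin.sum_univ_succ]
  simp only [rowDiff_zero_zero, rowDiff_succ_zero, Fin.val_zero, pow_zero, mul_one, one_mul,
    mul_zero, zero_mul, sum_const_zero, add_zero, minor_eq]
  exact detRowAlternating.toMultilinearMap.map_sum_finset
    (fun (i : Fin m) (x : ℕ) (j : Fin m) ↦ ((x + i).choose j : ℤ))
    fun i ↦ Icc (r i.castSucc) (r i.succ)

theorem det_shiftedBinomMatrix_cons_zero {m : ℕ} (r : Fin m → ℕ) :
    (shiftedBinomMatrix (Fin.cons 0 r : Fin (m + 1) → ℕ)).det * m.factorial =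
      (shiftedBinomMatrix r).det * ∏ i, ((r i + i + 1 : ℕ) : ℤ) := by
  have factorial_eq : (m.factorial : ℤ) = ∏ j : Fin m, ((j + 1 : ℕ) : ℤ) := by
    rw [← prod_range_add_one_eq_factorial, prod_range, Nat.cast_prod]
  have zero_zero : shiftedBinomMatrix (Fin.cons 0 r : Fin (m + 1) → ℕ) 0 0 = 1 := by
    simp [shiftedBinomMatrix]
  have zero_succ (j : Fin m) :
      shiftedBinomMatrix (Fin.cons 0 r : Fin (m + 1) → ℕ) 0 j.succ = 0 := by
    simp [shiftedBinomMatrix]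
  rw [det_succ_row_zero, Fin.sum_univ_succ]
  simp only [zero_zero, zero_succ, Fin.val_zero, pow_zero, one_mul, mul_zero, zero_mul,
    sum_const_zero, add_zero]
  rw [factorial_eq, mul_comm, ← det_mul_row, mul_comm, ← det_mul_column]
  congr 1
  ext i j
  have absorb := Nat.add_one_mul_choose_eq (r i + i) j
  simp only [of_apply, submatrix_apply, shiftedBinomMatrix, Fin.succAbove_zero, Fin.cons_succ,
    Fin.val_succ, ← add_assoc]
  rw [mul_comm]
  exact_mod_cast absorb.symm

theorem ssytLe_eq_det {m : ℕ} {μ : YoungDiagram} (hμ : μ.rowLen m = 0) :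
    (SSYTle μ m : ℤ) = (shiftedBinomMatrix (revRowLens m μ)).det := by
  induction m generalizing μ with
  | zero =>
    have notMem (i j : ℕ) : (i, j) ∉ μ := fun hij ↦ by
      have := mem_iff_lt_rowLen.1 (μ.up_left_mem i.zero_le le_rfl hij)
      omega
    let _ : Unique {T : SemistandardYoungTableau μ // EntryLE μ T 0} :=
      { default := ⟨.highestWeight μ, fun i j hij ↦ absurd hij (notMem i j)⟩
        uniq := fun T ↦ Subtype.ext <| SemistandardYoungTableau.ext fun i j ↦ by
          rw [T.1.zeros (notMem i j), SemistandardYoungTableau.zeros _ (notMem i j)] }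
    rw [SSYTle, Nat.card_unique, det_isEmpty, Nat.cast_one]
  | succ m ih =>
    rw [ssytLe_succ_eq_sum hμ, Nat.cast_sum, det_shiftedBinomMatrix_succ (revRowLens_mono _ μ)]
    refine sum_congr rfl fun r hr ↦ ?_
    rw [ih (rowLen_ofRevRowLens r), revRowLens_ofRevRowLens
      (monotone_of_mem_Icc_castSucc_succ (revRowLens_mono _ μ) hr)]

theorem ssytLe_succ_mul_factorial {m : ℕ} {μ : YoungDiagram} (hμ : μ.rowLen m = 0) :
    SSYTle μ (m + 1) * m.factorial = SSYTle μ m * ∏ k ∈ range m, (μ.rowLen k + (m - k)) := by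
  have revRowLens_succ : revRowLens (m + 1) μ = Fin.cons 0 (revRowLens m μ) := by
    refine funext (Fin.cases ?_ fun i ↦ ?_)
    · simpa [revRowLens] using hμ
    · simp [revRowLens]
  have rowProd_eq : ∏ k ∈ range m, (μ.rowLen k + (m - k)) =
      ∏ i : Fin m, (revRowLens m μ i + i + 1) := by
    rw [prod_range, ← Equiv.prod_comp Fin.revPerm]
    refine prod_congr rfl fun i _ ↦ ?_
    rw [Fin.revPerm_apply, revRowLens, Fin.val_rev]
    omega
  have hμ' : μ.rowLen (m + 1) = 0 := Nat.eq_zero_of_le_zero (hμ ▸ μ.rowLen_anti m _ m.le_succ)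
  rw [← Nat.cast_inj (R := ℤ), Nat.cast_mul, Nat.cast_mul, rowProd_eq, Nat.cast_prod,
    ssytLe_eq_det hμ', ssytLe_eq_det hμ, revRowLens_succ, det_shiftedBinomMatrix_cons_zero]

end Determinant

/-! ### The shape `(λ₁, λ₂, 2^{h₂-2}, 1^{h₁-h₂})` -/

theorem ssytLe_eq_sum_QYTeq_of_mem {μ : YoungDiagram} {k : ℕ} (hk : (k, 0) ∈ μ) (M : ℕ) :
    SSYTle μ (k + 1 + M) =
      ∑ r ∈ range (M + 1), QYTeq μ (k + 1 + r) * (μ.card + M - r).choose μ.card := by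
  have qytEq_zero (r : ℕ) (hr : r ∈ range k) : QYTeq μ (r + 1) = 0 :=
    qytEq_eq_zero_of_mem (μ.up_left_mem (mem_range.1 hr) le_rfl hk)
  rw [ssytLe_eq_sum_QYTeq (card_pos.2 ⟨_, hk⟩), show k + 1 + M = k + (M + 1) by ring, sum_range_add,
    sum_eq_zero fun r hr ↦ by rw [qytEq_zero r hr, zero_mul], zero_add]
  refine sum_congr rfl fun r hr ↦ ?_
  have := mem_range.1 hr
  rw [show k + (M + 1) - 1 - (k + r) = M - r by omega, ← Nat.add_sub_assoc (by omega),
    show k + r + 1 = k + 1 + r by ring]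

theorem prod_Ico_sub_mul_factorial {c s t : ℕ} (hst : s ≤ t) (htc : t ≤ c) :
    (∏ k ∈ Ico s t, (c - k)) * (c - t).factorial = (c - s).factorial := by
  rw [prod_Ico_eq_prod_range]
  simp_rw [Nat.sub_add_eq]
  rw [← Nat.descFactorial_eq_prod_range, mul_comm, show c - t = c - s - (t - s) by omega,
    Nat.factorial_mul_descFactorial (by omega)]

theorem card_eq_sum_rowLen {μ : YoungDiagram} {h : ℕ} (hμ : μ.rowLen h = 0) :
    μ.card = ∑ i ∈ range h, μ.rowLen i := by
  have row_mem (x : ℕ × ℕ) (hx : x ∈ μ.cells) : x.1 ∈ range h := by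
    by_contra hlt
    have := mem_iff_lt_rowLen.1 ((mem_cells _).1 hx)
    have := μ.rowLen_anti h x.1 (by simpa using hlt)
    omega
  refine (card_eq_sum_card_fiberwise row_mem).trans (sum_congr rfl fun i _ ↦ ?_)
  rw [rowLen_eq_card, row]

namespace HasRows2

variable {μ : YoungDiagram} {l1 l2 h1 h2 m : ℕ}

theorem card_eq (hμ : HasRows2 μ l1 l2 h1 h2) (hh2 : 2 ≤ h2) (hh : h2 ≤ h1) :
    μ.card = l1 + l2 + 2 * (h2 - 2) + (h1 - h2) := by
  obtain ⟨row_zero, row_one, row_two, row_h2, row_h1⟩ := hμ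
  rw [card_eq_sum_rowLen (row_h1 h1 le_rfl), ← sum_range_add_sum_Ico _ (hh2.trans hh),
    ← sum_Ico_consecutive _ hh2 hh,
    sum_congr rfl fun i hi ↦ row_two i (mem_Ico.1 hi).1 (mem_Ico.1 hi).2,
    sum_congr rfl fun i hi ↦ row_h2 i (mem_Ico.1 hi).1 (mem_Ico.1 hi).2]
  simp [sum_range_succ, row_zero, row_one]
  ring

theorem prod_rowLen_add (hμ : HasRows2 μ l1 l2 h1 h2) (hh2 : 2 ≤ h2) (hh : h2 ≤ h1)
    (hm : h1 ≤ m) :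
    ∏ k ∈ range m, (μ.rowLen k + (m - k)) =
      (l1 + m) * (l2 + m - 1) * (∏ k ∈ Ico 2 h2, (m + 2 - k)) *
        (∏ k ∈ Ico h2 h1, (m + 1 - k)) * ∏ k ∈ Ico h1 m, (m - k) := by
  obtain ⟨row_zero, row_one, row_two, row_h2, row_h1⟩ := hμ
  rw [range_eq_Ico, ← prod_Ico_consecutive _ h1.zero_le hm, ← prod_Ico_consecutive _ h2.zero_le hh,
    ← prod_Ico_consecutive _ (Nat.zero_le 2) hh2, ← range_eq_Ico, prod_range_succ, prod_range_one,
    row_zero, row_one, Nat.sub_zero, ← Nat.add_sub_assoc (by omega)]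
  congr 1
  · congr 1
    · congr 1
      refine prod_congr rfl fun k hk ↦ ?_
      have := mem_Ico.1 hk
      have := row_two k this.1 this.2
      omega
    · refine prod_congr rfl fun k hk ↦ ?_
      have := mem_Ico.1 hk
      have := row_h2 k this.1 this.2
      omega
  · exact prod_congr rfl fun k hk ↦ by rw [row_h1 k (mem_Ico.1 hk).1, zero_add]

theorem prod_rowLen_add_mul (hμ : HasRows2 μ l1 l2 h1 h2) (hh2 : 2 ≤ h2) (hh : h2 ≤ h1)
    (hm : h1 ≤ m) :
    (∏ k ∈ range m, (μ.rowLen k + (m - k))) * ((m + 1 - h1) * (m + 2 - h2)) =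
      (l1 + m) * (l2 + m - 1) * m.factorial := by
  have prod_two := prod_Ico_sub_mul_factorial hh2 (show h2 ≤ m + 2 by omega)
  have prod_one := prod_Ico_sub_mul_factorial hh (show h1 ≤ m + 1 by omega)
  have prod_zero := prod_Ico_sub_mul_factorial hm le_rfl
  rw [show m + 2 - h2 = m + 1 - h2 + 1 by omega, Nat.factorial_succ, Nat.add_sub_cancel] at prod_two
  rw [show m + 1 - h1 = m - h1 + 1 by omega, Nat.factorial_succ] at prod_one
  rw [Nat.sub_self, Nat.factorial_zero, mul_one] at prod_zero
  rw [hμ.prod_rowLen_add hh2 hh hm, prod_zero, show m + 2 - h2 = m + 1 - h2 + 1 by omega,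
    show m + 1 - h1 = m - h1 + 1 by omega, ← prod_two, ← prod_one]
  ring

theorem ssytLe_succ_mul (hμ : HasRows2 μ l1 l2 h1 h2) (hh2 : 2 ≤ h2) (hh : h2 ≤ h1) (hm : h1 ≤ m) :
    SSYTle μ (m + 1) * ((m + 1 - h1) * (m + 2 - h2)) =
      SSYTle μ m * ((l1 + m) * (l2 + m - 1)) := by
  have step := ssytLe_succ_mul_factorial (hμ.2.2.2.2 m hm)
  refine Nat.eq_of_mul_eq_mul_right m.factorial_pos ?_
  rw [mul_right_comm, step, mul_assoc, hμ.prod_rowLen_add_mul hh2 hh hm, ← mul_assoc]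

theorem mem_of_lt (hμ : HasRows2 μ l1 l2 h1 h2) (hl2 : 0 < l2) {k : ℕ} (hk : k < h1) :
    (k, 0) ∈ μ := by
  obtain ⟨-, rfl, row_two, row_h2, -⟩ := hμ
  rw [mem_iff_lt_rowLen]
  obtain hk₁ | hk₁ := Nat.lt_or_ge 1 k
  · obtain hk₂ | hk₂ := Nat.lt_or_ge k h2
    · exact (row_two k hk₁ hk₂).symm ▸ two_pos
    · exact (row_h2 k hk₂ hk).symm ▸ one_pos
  · exact hl2.trans_le (μ.rowLen_anti k 1 hk₁)

end HasRows2

theorem qyt_ssyt_identity_two_general {μ : YoungDiagram} {l1 l2 h1 h2 m : ℕ}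
    (hμ : HasRows2 μ l1 l2 h1 h2) (hl2 : 0 < l2) (hh2 : 2 ≤ h2) (hh : h2 ≤ h1) (hm : h1 ≤ m) :
    (m + l1 - 1).choose (m - h1) * (m + l2 - 2).choose (m - h1) * QYTeq μ m =
      (l1 + h2 - 2).choose (m - h1) * (l2 + h2 - 3).choose (m - h1) * SSYTle μ m := by
  obtain ⟨M, rfl⟩ := Nat.exists_eq_add_of_le hm
  obtain ⟨k, rfl⟩ : ∃ k, h1 = k + 1 := ⟨h1 - 1, by omega⟩
  have card_eq : μ.card = l1 + h2 - 2 + (l2 + h2 - 3) + (k + 1 - h2 + 1) := by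
    rw [hμ.card_eq hh2 hh]
    omega
  have expansion := ssytLe_eq_sum_QYTeq_of_mem (hμ.mem_of_lt hl2 k.lt_succ_self)
  have ratio (M : ℕ) : SSYTle μ (k + 1 + (M + 1)) * ((M + 1) * (M + (k + 1 - h2 + 1) + 1)) =
      SSYTle μ (k + 1 + M) * ((M + (l1 + h2 - 2) + (k + 1 - h2 + 1) + 1) *
        (M + (l2 + h2 - 3) + (k + 1 - h2 + 1) + 1)) := by
    convert hμ.ssytLe_succ_mul hh2 hh (Nat.le_add_right (k + 1) M) using 3 <;> omega
  convert choose_mul_choose_mul_eq_of_ratio_of_expansion ratio (card_eq ▸ expansion) M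
    using 4 <;> omega

/-- the identity
`C(m+λ₁-1, m-h₁) · C(m+λ₂-2, m-h₁) · QYT_{=m}(λ) = C(λ₁+h₂-2, m-h₁) · C(λ₂+h₂-3, m-h₁) · SSYT_m(λ)`
for `λ = (λ₁, λ₂, 2^{h₂-2}, 1^{h₁-h₂})`. -/
theorem qyt_ssyt_identity_two (l1 l2 h1 h2 m : ℕ)
    (hl2 : 2 ≤ l2) (hl : l2 ≤ l1) (hh2 : 2 ≤ h2) (hh : h2 ≤ h1)
    (hm1 : h1 ≤ m) (hm2 : m ≤ h1 + h2 + l2 - 3)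
    (μ : YoungDiagram) (hμ : HasRows2 μ l1 l2 h1 h2) :
    (m + l1 - 1).choose (m - h1) * (m + l2 - 2).choose (m - h1) * QYTeq μ m =
      (l1 + h2 - 2).choose (m - h1) * (l2 + h2 - 3).choose (m - h1) * SSYTle μ m :=
  qyt_ssyt_identity_two_general hμ (by omega) hh2 hh hm1
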